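/- arXiv:2104.11289 — 10 statements merged into one kernel-verified Lean document; each statement's English description precedes it below -/
import Mathlib

section
/- Suppose the articulated-hauler kinematic constraints (E1), (E2), (E3) hold and D = l2·cos(α34) + l1·cos(γ − α34) ≠ 0. Then the tractor-unit angular velocity satisfies Ω1 = (sin(γ + α12 − α34)·v12 + l2·cos(α34)·γ̇) / D. -/
/-- Under the articulated-hauler kinematic constraints (E1), (E2), (E3),
with `D = l2·cos α34 + l1·cos (γ − α34) ≠ 0`, the tractor-unit angular velocity satisfies
`Ω1 = (sin (γ + α12 − α34)·v12 + l2·cos α34·γ̇) / D`. -/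
theorem tractor_angular_velocity
    (l1 l2 γ γd v12 α12 v34 α34 Ω1 Ω2 : ℝ)
    (hE1 : v34 * Real.cos α34 =
      Real.cos γ * (v12 * Real.cos α12) -
        Real.sin γ * (v12 * Real.sin α12 - l1 * Ω1))
    (hE2 : v34 * Real.sin α34 + l2 * Ω2 =
      Real.sin γ * (v12 * Real.cos α12) +
        Real.cos γ * (v12 * Real.sin α12 - l1 * Ω1))
    (hE3 : Ω2 = Ω1 - γd)
    (hD : l2 * Real.cos α34 + l1 * Real.cos (γ - α34) ≠ 0) :
    Ω1 = (Real.sin (γ + α12 - α34) * v12 + l2 * Real.cos α34 * γd) /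
      (l2 * Real.cos α34 + l1 * Real.cos (γ - α34)) := by
  subst hE3
  rw [eq_div_iff hD, Real.sin_sub, Real.sin_add, Real.cos_add, Real.cos_sub]
  linear_combination Real.cos α34 * hE2 - Real.sin α34 * hE1
end

section
/- Suppose the articulated-hauler kinematic constraints (E1), (E2), (E3) hold and D = l2·cos(α34) + l1·cos(γ − α34) ≠ 0. Then the trailer-unit angular velocity satisfies Ω2 = (sin(γ + α12 − α34)·v12 − l1·cos(γ − α34)·γ̇) / D. -/
/-- Under the articulated-hauler kinematic constraints (E1), (E2), (E3),
with `D ≠ 0`, the trailer-unit angular velocity satisfies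
`Ω2 = (sin (γ + α12 − α34)·v12 − l1·cos (γ − α34)·γ̇) / D`. -/
theorem trailer_angular_velocity
    (l1 l2 γ γd v12 α12 v34 α34 Ω1 Ω2 : ℝ)
    (hE1 : v34 * Real.cos α34 =
      Real.cos γ * (v12 * Real.cos α12) -
        Real.sin γ * (v12 * Real.sin α12 - l1 * Ω1))
    (hE2 : v34 * Real.sin α34 + l2 * Ω2 =
      Real.sin γ * (v12 * Real.cos α12) +
        Real.cos γ * (v12 * Real.sin α12 - l1 * Ω1))
    (hE3 : Ω2 = Ω1 - γd)
    (hD : l2 * Real.cos α34 + l1 * Real.cos (γ - α34) ≠ 0) :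
    Ω2 = (Real.sin (γ + α12 - α34) * v12 - l1 * Real.cos (γ - α34) * γd) /
      (l2 * Real.cos α34 + l1 * Real.cos (γ - α34)) := by
  obtain rfl : Ω1 = Ω2 + γd := by linarith
  rw [eq_div_iff hD]
  simp only [Real.sin_sub, Real.cos_sub, Real.sin_add, Real.cos_add]
  linear_combination Real.cos α34 * hE2 - Real.sin α34 * hE1
end

section
/- Suppose the articulated-hauler kinematic constraints (E1), (E2), (E3) hold and D = l2·cos(α34) + l1·cos(γ − α34) ≠ 0. Then the trailer-unit speed satisfies v34 = ((l2·cos(γ + α12) + l1·cos(α12))·v12 + l1·l2·sin(γ)·γ̇) / D. -/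
/-- Under the articulated-hauler kinematic constraints (E1), (E2), (E3),
with `D ≠ 0`, the trailer-unit speed satisfies
`v34 = ((l2·cos (γ + α12) + l1·cos α12)·v12 + l1·l2·sin γ·γ̇) / D`. -/
theorem trailer_speed
    (l1 l2 γ γd v12 α12 v34 α34 Ω1 Ω2 : ℝ)
    (hE1 : v34 * Real.cos α34 =
      Real.cos γ * (v12 * Real.cos α12) -
        Real.sin γ * (v12 * Real.sin α12 - l1 * Ω1))
    (hE2 : v34 * Real.sin α34 + l2 * Ω2 =
      Real.sin γ * (v12 * Real.cos α12) +
        Real.cos γ * (v12 * Real.sin α12 - l1 * Ω1))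
    (hE3 : Ω2 = Ω1 - γd)
    (hD : l2 * Real.cos α34 + l1 * Real.cos (γ - α34) ≠ 0) :
    v34 = ((l2 * Real.cos (γ + α12) + l1 * Real.cos α12) * v12 +
        l1 * l2 * Real.sin γ * γd) /
      (l2 * Real.cos α34 + l1 * Real.cos (γ - α34)) := by
  subst hE3
  rw [eq_div_iff hD, Real.cos_sub, Real.cos_add]
  linear_combination (l2 + l1 * Real.cos γ) * hE1 + l1 * Real.sin γ * hE2 +
    l1 * v12 * Real.cos α12 * Real.sin_sq_add_cos_sq γ
end

section
/- If D = l2·cos(α34) + l1·cos(γ − α34) ≠ 0, then the linear system consisting of the articulated-hauler kinematic constraints (E1), (E2), (E3) has exactly one solution (v34, Ω1, Ω2) in ℝ³ for any given real values of v12, α12, α34, γ, γ̇, l1, l2. -/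
theorem aux_two_by_two (l1 l2 c s C S p q g : ℝ) (hD : l2 * c + l1 * (C * c + S * s) ≠ 0) :
    ∃! x : ℝ × ℝ × ℝ,
      x.1 * c = C * p - S * (q - l1 * x.2.1) ∧
      x.1 * s + l2 * x.2.2 = S * p + C * (q - l1 * x.2.1) ∧
      x.2.2 = x.2.1 - g := by
  obtain ⟨D, hDe⟩ : ∃ D, D = l2 * c + l1 * (C * c + S * s) := ⟨_, rfl⟩
  rw [← hDe] at hD
  refine ⟨(((C * p - S * q) * (l2 + l1 * C) + l1 * S * (S * p + C * q + l2 * g)) / D,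
    (c * (S * p + C * q + l2 * g) - s * (C * p - S * q)) / D,
    (c * (S * p + C * q + l2 * g) - s * (C * p - S * q)) / D - g), ⟨?_, ?_, rfl⟩, ?_⟩
  · dsimp only
    field_simp
    rw [hDe]
    ring
  · dsimp only
    field_simp
    rw [hDe]
    ring
  · rintro ⟨v, w, z⟩ ⟨h1, h2, h3⟩
    dsimp only at h1 h2 h3
    subst h3
    have hw : w = (c * (S * p + C * q + l2 * g) - s * (C * p - S * q)) / D := by
      rw [eq_div_iff hD, hDe]
      linear_combination c * h2 - s * h1
    have hv : v = ((C * p - S * q) * (l2 + l1 * C) + l1 * S * (S * p + C * q + l2 * g)) / D := by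
      rw [eq_div_iff hD, hDe]
      linear_combination (l2 + l1 * C) * h1 + l1 * S * h2
    rw [← hw, ← hv]

/-- If `D = l2·cos α34 + l1·cos (γ − α34) ≠ 0`, then the linear system
(E1), (E2), (E3), viewed in the unknowns `(v34, Ω1, Ω2)`, has exactly one solution in `ℝ³`
for any given real `v12, α12, α34, γ, γ̇, l1, l2`. -/
theorem kinematic_system_unique_solution
    (l1 l2 γ γd v12 α12 α34 : ℝ)
    (hD : l2 * Real.cos α34 + l1 * Real.cos (γ - α34) ≠ 0) :
    ∃! x : ℝ × ℝ × ℝ,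
      x.1 * Real.cos α34 =
        Real.cos γ * (v12 * Real.cos α12) -
          Real.sin γ * (v12 * Real.sin α12 - l1 * x.2.1) ∧
      x.1 * Real.sin α34 + l2 * x.2.2 =
        Real.sin γ * (v12 * Real.cos α12) +
          Real.cos γ * (v12 * Real.sin α12 - l1 * x.2.1) ∧
      x.2.2 = x.2.1 - γd := by
  rw [Real.cos_sub] at hD
  exact aux_two_by_two l1 l2 _ _ _ _ _ _ γd hD
end

section
/- Suppose the articulated-hauler kinematic constraints (E1), (E2), (E3) hold and D = l2·cos(α34) + l1·cos(γ − α34) ≠ 0. Then v34 = q(α12)·v12 + q(−π/2)·l1·γ̇, where q(a) = (l2·cos(a + γ) + l1·cos(a)) / D. -/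
/-- Under the kinematic constraints (E1), (E2), (E3), with `D ≠ 0`,
`v34 = q α12 · v12 + q (−π/2) · l1 · γ̇`, where `q a = (l2·cos (a + γ) + l1·cos a) / D`. -/
theorem trailer_speed_q_form
    (l1 l2 γ γd v12 α12 v34 α34 Ω1 Ω2 : ℝ)
    (hE1 : v34 * Real.cos α34 =
      Real.cos γ * (v12 * Real.cos α12) -
        Real.sin γ * (v12 * Real.sin α12 - l1 * Ω1))
    (hE2 : v34 * Real.sin α34 + l2 * Ω2 =
      Real.sin γ * (v12 * Real.cos α12) +
        Real.cos γ * (v12 * Real.sin α12 - l1 * Ω1))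
    (hE3 : Ω2 = Ω1 - γd)
    (hD : l2 * Real.cos α34 + l1 * Real.cos (γ - α34) ≠ 0) :
    v34 =
      (fun a : ℝ => (l2 * Real.cos (a + γ) + l1 * Real.cos a) /
        (l2 * Real.cos α34 + l1 * Real.cos (γ - α34))) α12 * v12 +
      (fun a : ℝ => (l2 * Real.cos (a + γ) + l1 * Real.cos a) /
        (l2 * Real.cos α34 + l1 * Real.cos (γ - α34))) (-(Real.pi / 2)) * l1 * γd := by
  have h1 : Real.cos (-(Real.pi / 2) + γ) = Real.sin γ := by
    rw [neg_add_eq_sub, Real.cos_sub_pi_div_two]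
  have h2 : Real.cos (-(Real.pi / 2)) = 0 := by
    rw [Real.cos_neg, Real.cos_pi_div_two]
  simp only [h1, h2]
  have key : v34 * (l2 * Real.cos α34 + l1 * Real.cos (γ - α34)) =
      (l2 * Real.cos (α12 + γ) + l1 * Real.cos α12) * v12 +
        (l2 * Real.sin γ + l1 * 0) * l1 * γd := by
    rw [Real.cos_sub, Real.cos_add]
    subst hE3
    linear_combination (l2 + l1 * Real.cos γ) * hE1 + l1 * Real.sin γ * hE2 +
      l1 * v12 * Real.cos α12 * Real.sin_sq_add_cos_sq γ
  rw [eq_div_of_mul_eq hD key]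
  ring
end

section
/- Suppose the articulated-hauler kinematic constraints (E1), (E2), (E3) hold and D = l2·cos(α34) + l1·cos(γ − α34) ≠ 0. Then Ω1 = p(α12)·v12 + p(π/2 − γ)·l2·γ̇, where p(a) = sin(γ + a − α34) / D. -/
/-- Under the kinematic constraints (E1), (E2), (E3), with `D ≠ 0`,
`Ω1 = p α12 · v12 + p (π/2 − γ) · l2 · γ̇`, where `p a = sin (γ + a − α34) / D`. -/
theorem tractor_angular_velocity_p_form
    (l1 l2 γ γd v12 α12 v34 α34 Ω1 Ω2 : ℝ)
    (hE1 : v34 * Real.cos α34 =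
      Real.cos γ * (v12 * Real.cos α12) -
        Real.sin γ * (v12 * Real.sin α12 - l1 * Ω1))
    (hE2 : v34 * Real.sin α34 + l2 * Ω2 =
      Real.sin γ * (v12 * Real.cos α12) +
        Real.cos γ * (v12 * Real.sin α12 - l1 * Ω1))
    (hE3 : Ω2 = Ω1 - γd)
    (hD : l2 * Real.cos α34 + l1 * Real.cos (γ - α34) ≠ 0) :
    Ω1 =
      (fun a : ℝ => Real.sin (γ + a - α34) /
        (l2 * Real.cos α34 + l1 * Real.cos (γ - α34))) α12 * v12 +
      (fun a : ℝ => Real.sin (γ + a - α34) /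
        (l2 * Real.cos α34 + l1 * Real.cos (γ - α34))) (Real.pi / 2 - γ) * l2 * γd := by
  have h1 : Real.sin (γ + (Real.pi / 2 - γ) - α34) = Real.cos α34 := by
    rw [← Real.sin_pi_div_two_sub]
    congr 1
    ring
  have key : Ω1 * (l2 * Real.cos α34 + l1 * Real.cos (γ - α34)) =
      Real.sin (γ + α12 - α34) * v12 + Real.cos α34 * l2 * γd := by
    rw [Real.sin_sub, Real.cos_sub, Real.sin_add, Real.cos_add]
    subst hE3
    linear_combination Real.cos α34 * hE2 - Real.sin α34 * hE1
  simp only [h1]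
  rw [eq_div_of_mul_eq hD key]
  ring
end

section
/- Suppose the articulated-hauler kinematic constraints (E1), (E2), (E3) hold and D = l2·cos(α34) + l1·cos(γ − α34) ≠ 0. Then Ω2 = p(α12)·v12 + p(−π/2)·l1·γ̇, where p(a) = sin(γ + a − α34) / D. -/
/-- Under the kinematic constraints (E1), (E2), (E3), with `D ≠ 0`,
`Ω2 = p α12 · v12 + p (−π/2) · l1 · γ̇`, where `p a = sin (γ + a − α34) / D`. -/
theorem trailer_angular_velocity_p_form
    (l1 l2 γ γd v12 α12 v34 α34 Ω1 Ω2 : ℝ)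
    (hE1 : v34 * Real.cos α34 =
      Real.cos γ * (v12 * Real.cos α12) -
        Real.sin γ * (v12 * Real.sin α12 - l1 * Ω1))
    (hE2 : v34 * Real.sin α34 + l2 * Ω2 =
      Real.sin γ * (v12 * Real.cos α12) +
        Real.cos γ * (v12 * Real.sin α12 - l1 * Ω1))
    (hE3 : Ω2 = Ω1 - γd)
    (hD : l2 * Real.cos α34 + l1 * Real.cos (γ - α34) ≠ 0) :
    Ω2 =
      (fun a : ℝ => Real.sin (γ + a - α34) /
        (l2 * Real.cos α34 + l1 * Real.cos (γ - α34))) α12 * v12 +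
      (fun a : ℝ => Real.sin (γ + a - α34) /
        (l2 * Real.cos α34 + l1 * Real.cos (γ - α34))) (-(Real.pi / 2)) * l1 * γd := by
  have h1 : Real.sin (γ + -(Real.pi / 2) - α34) = -Real.cos (γ - α34) := by
    rw [← Real.sin_sub_pi_div_two]
    congr 1
    ring
  have hΩ : Ω1 = Ω2 + γd := by linarith
  subst hΩ
  have key : Ω2 * (l2 * Real.cos α34 + l1 * Real.cos (γ - α34)) =
      Real.sin (γ + α12 - α34) * v12 + -Real.cos (γ - α34) * l1 * γd := by
    rw [Real.sin_sub, Real.sin_add, Real.cos_add, Real.cos_sub]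
    linear_combination Real.cos α34 * hE2 - Real.sin α34 * hE1
  show Ω2 = Real.sin (γ + α12 - α34) / (l2 * Real.cos α34 + l1 * Real.cos (γ - α34)) * v12 +
    Real.sin (γ + -(Real.pi / 2) - α34) /
      (l2 * Real.cos α34 + l1 * Real.cos (γ - α34)) * l1 * γd
  rw [h1, div_mul_eq_mul_div, div_mul_eq_mul_div, div_mul_eq_mul_div, ← add_div,
    eq_div_iff hD]
  exact key
end

section
/- Suppose the articulated-hauler kinematic constraints (E1), (E2), (E3) hold, D = l2·cos(α34) + l1·cos(γ − α34) ≠ 0, and the steering angle is in steady state, i.e. γ̇ = 0. Then Ω1 = Ω2 = p(α12)·v12, where p(a) = sin(γ + a − α34) / D; in particular, 1/p(α12) is the tractor unit's steady-state turning radius whenever p(α12) ≠ 0 and v12 ≠ 0. -/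
/-- Under (E1), (E2), (E3), with `D ≠ 0` and steady-state steering
`γ̇ = 0`, we have `Ω1 = Ω2 = p α12 · v12` where `p a = sin (γ + a − α34) / D`;
in particular the tractor unit's steady-state turning radius `v12 / Ω1` equals
`1 / p α12` whenever `p α12 ≠ 0` and `v12 ≠ 0`. -/
theorem steady_state_angular_velocities
    (l1 l2 γ γd v12 α12 v34 α34 Ω1 Ω2 : ℝ)
    (hE1 : v34 * Real.cos α34 =
      Real.cos γ * (v12 * Real.cos α12) -
        Real.sin γ * (v12 * Real.sin α12 - l1 * Ω1))
    (hE2 : v34 * Real.sin α34 + l2 * Ω2 =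
      Real.sin γ * (v12 * Real.cos α12) +
        Real.cos γ * (v12 * Real.sin α12 - l1 * Ω1))
    (hE3 : Ω2 = Ω1 - γd)
    (hD : l2 * Real.cos α34 + l1 * Real.cos (γ - α34) ≠ 0)
    (hss : γd = 0) :
    Ω1 = Ω2 ∧
    Ω1 = (fun a : ℝ => Real.sin (γ + a - α34) /
        (l2 * Real.cos α34 + l1 * Real.cos (γ - α34))) α12 * v12 ∧
    ((fun a : ℝ => Real.sin (γ + a - α34) /
        (l2 * Real.cos α34 + l1 * Real.cos (γ - α34))) α12 ≠ 0 → v12 ≠ 0 →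
      v12 / Ω1 =
        1 / (fun a : ℝ => Real.sin (γ + a - α34) /
          (l2 * Real.cos α34 + l1 * Real.cos (γ - α34))) α12) := by
  have h12 : Ω2 = Ω1 := by rw [hE3, hss, sub_zero]
  subst h12
  have key : Ω2 * (l2 * Real.cos α34 + l1 * Real.cos (γ - α34)) =
      Real.sin (γ + α12 - α34) * v12 := by
    rw [Real.sin_sub, Real.sin_add, Real.cos_add, Real.cos_sub]
    linear_combination Real.cos α34 * hE2 - Real.sin α34 * hE1
  have h2 : Ω2 = Real.sin (γ + α12 - α34) /
      (l2 * Real.cos α34 + l1 * Real.cos (γ - α34)) * v12 := by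
    rw [div_mul_eq_mul_div, eq_div_iff hD, key]
  refine ⟨rfl, h2, ?_⟩
  intro hp hv
  beta_reduce at hp ⊢
  generalize Real.sin (γ + α12 - α34) /
      (l2 * Real.cos α34 + l1 * Real.cos (γ - α34)) = q at h2 hp ⊢
  rw [h2]
  field_simp
end

section
/- Suppose the articulated-hauler kinematic constraints (E1), (E2), (E3) hold, D = l2·cos(α34) + l1·cos(γ − α34) ≠ 0, γ̇ = 0, Ω1 ≠ 0, and v12 ≠ 0. Then the quotient of the trailer and tractor steady-state turning radii satisfies (v34/Ω2) / (v12/Ω1) = q(α12), where q(a) = (l2·cos(a + γ) + l1·cos(a)) / D. -/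
/-- Under (E1), (E2), (E3), with `D ≠ 0`, `γ̇ = 0`, `Ω1 ≠ 0`, and
`v12 ≠ 0`, the quotient of the trailer and tractor steady-state turning radii satisfies
`(v34 / Ω2) / (v12 / Ω1) = q α12`, where `q a = (l2·cos (a + γ) + l1·cos a) / D`. -/
theorem turning_radius_quotient
    (l1 l2 γ γd v12 α12 v34 α34 Ω1 Ω2 : ℝ)
    (hE1 : v34 * Real.cos α34 =
      Real.cos γ * (v12 * Real.cos α12) -
        Real.sin γ * (v12 * Real.sin α12 - l1 * Ω1))
    (hE2 : v34 * Real.sin α34 + l2 * Ω2 =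
      Real.sin γ * (v12 * Real.cos α12) +
        Real.cos γ * (v12 * Real.sin α12 - l1 * Ω1))
    (hE3 : Ω2 = Ω1 - γd)
    (hD : l2 * Real.cos α34 + l1 * Real.cos (γ - α34) ≠ 0)
    (hss : γd = 0) (hΩ1 : Ω1 ≠ 0) (hv12 : v12 ≠ 0) :
    (v34 / Ω2) / (v12 / Ω1) =
      (fun a : ℝ => (l2 * Real.cos (a + γ) + l1 * Real.cos a) /
        (l2 * Real.cos α34 + l1 * Real.cos (γ - α34))) α12 := by
  subst hss
  have h2 : Ω2 = Ω1 := by rw [hE3, sub_zero]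
  subst h2
  have hq : (v34 / Ω2) / (v12 / Ω2) = v34 / v12 := by
    field_simp
  rw [hq]
  show v34 / v12 = (l2 * Real.cos (α12 + γ) + l1 * Real.cos α12) /
        (l2 * Real.cos α34 + l1 * Real.cos (γ - α34))
  rw [div_eq_div_iff hv12 hD, Real.cos_add, Real.cos_sub]
  linear_combination (l2 + l1 * Real.cos γ) * hE1 + l1 * Real.sin γ * hE2 +
    l1 * v12 * Real.cos α12 * Real.sin_sq_add_cos_sq γ
end

section
/- Suppose the articulated-hauler kinematic constraints (E1), (E2), (E3) hold, D = l2·cos(α34) + l1·cos(γ − α34) ≠ 0, and the slip angles vanish, α12 = α34 = 0. Then v34 = ((l2·cos(γ) + l1)·v12 + l1·l2·sin(γ)·γ̇) / (l2 + l1·cos(γ)); consequently, if moreover mean wheel speeds relate to unit speeds by v12 = ω_f·r and v34 = ω_b·r for a tire radius r, then ω_b·r − ((l2·cos(γ) + l1)/(l2 + l1·cos(γ)))·ω_f·r − (l2·sin(γ)/(l2 + l1·cos(γ)))·l1·γ̇ = 0. -/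
/-- Under (E1), (E2), (E3), with `D ≠ 0` and vanishing slip angles
`α12 = α34 = 0`, the trailer speed satisfies
`v34 = ((l2·cos γ + l1)·v12 + l1·l2·sin γ·γ̇) / (l2 + l1·cos γ)`; consequently, if the
mean wheel speeds satisfy `v12 = ω_f·r` and `v34 = ω_b·r`, then
`ω_b·r − ((l2·cos γ + l1)/(l2 + l1·cos γ))·ω_f·r − (l2·sin γ/(l2 + l1·cos γ))·l1·γ̇ = 0`. -/
theorem zero_slip_angle_speed_relation
    (l1 l2 γ γd v12 α12 v34 α34 Ω1 Ω2 : ℝ)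
    (hE1 : v34 * Real.cos α34 =
      Real.cos γ * (v12 * Real.cos α12) -
        Real.sin γ * (v12 * Real.sin α12 - l1 * Ω1))
    (hE2 : v34 * Real.sin α34 + l2 * Ω2 =
      Real.sin γ * (v12 * Real.cos α12) +
        Real.cos γ * (v12 * Real.sin α12 - l1 * Ω1))
    (hE3 : Ω2 = Ω1 - γd)
    (hD : l2 * Real.cos α34 + l1 * Real.cos (γ - α34) ≠ 0)
    (h12 : α12 = 0) (h34 : α34 = 0) :
    v34 = ((l2 * Real.cos γ + l1) * v12 + l1 * l2 * Real.sin γ * γd) /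
        (l2 + l1 * Real.cos γ) ∧
    ∀ ωf ωb r : ℝ, v12 = ωf * r → v34 = ωb * r →
      ωb * r - ((l2 * Real.cos γ + l1) / (l2 + l1 * Real.cos γ)) * (ωf * r) -
        (l2 * Real.sin γ / (l2 + l1 * Real.cos γ)) * (l1 * γd) = 0 := by
  subst h12 h34 hE3
  simp only [Real.cos_zero, Real.sin_zero, sub_zero, mul_one, mul_zero, zero_add, zero_sub]
    at hE1 hE2 hD
  have key : v34 = ((l2 * Real.cos γ + l1) * v12 + l1 * l2 * Real.sin γ * γd) /
      (l2 + l1 * Real.cos γ) := by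
    rw [eq_div_iff hD]
    linear_combination (l2 + l1 * Real.cos γ) * hE1 + Real.sin γ * l1 * hE2 +
      l1 * v12 * Real.sin_sq_add_cos_sq γ
  refine ⟨key, ?_⟩
  intro ωf ωb r h1 h2
  rw [← h1, ← h2, key]
  ring
end
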